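/- The Julia set of f in ℚ₂ equals the set of points whose entire forward orbit stays in 4ℤ₂ ∪ (1 + 4ℤ₂): J(f) = {x ∈ ℚ₂ : f^[n](x) ∈ 4ℤ₂ ∪ (1 + 4ℤ₂) for all n ≥ 0} = ⋂_{n≥0} (f^[n])^{−1}(4ℤ₂ ∪ (1 + 4ℤ₂)). -/

import Mathlib

open Function Set

/-- The cubic polynomial `f(x) = (9/4)·x·(x−1)²` acting on `ℚ₂`. -/
noncomputable def f : ℚ_[2] → ℚ_[2] := fun x => (9 / 4 : ℚ_[2]) * x * (x - 1) ^ 2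

/-- The spherical distance `ρ(x,y) = |x−y|₂ / (max(|x|₂,1)·max(|y|₂,1))` on `ℚ₂`. -/
noncomputable def rho (x y : ℚ_[2]) : ℝ := ‖x - y‖ / (max ‖x‖ 1 * max ‖y‖ 1)

/-- `x` is a Fatou point of `f` in `ℚ₂`: the family of iterates of `f` is
equicontinuous at `x` with respect to the spherical distance `ρ`. -/
def fatou (x : ℚ_[2]) : Prop :=
  ∀ ε : ℝ, 0 < ε → ∃ δ : ℝ, 0 < δ ∧
    ∀ y : ℚ_[2], ‖y - x‖ < δ → ∀ n : ℕ, rho (f^[n] x) (f^[n] y) < ε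

/-!
Modulo `4` a point of `ℤ₂` is `0`, `1`, `2` or `3`. The points near `3` form a disk about the
superattracting fixed point `1/3`; those near `2` leave `ℤ₂` in one step, and `ρ` is contracted
outside `ℤ₂`. So an orbit meeting the complement of `4ℤ₂ ∪ (1 + 4ℤ₂)` consists of Fatou points.

On `4ℤ₂` the map expands distances by exactly `4`, but it contracts near the critical point
`1 ↦ 0`. The contraction is harmless for the singular metric `|dx| / |x|`: it is invariant on `4ℤ₂`,
and if `u = x - 1` then near `x` distances are first multiplied by `2|u|` while `|f(x)| = 4|u|²`, so
the metric grows by the factor `1 / (2|u|) ≥ 2`. Hence the return map to `1 + 4ℤ₂` expands, unless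
`x` and `y` are at distance exactly `|u| / 2`, where `y` may be the reflection of `x` in the
critical point. Given companions `y`, `z` of `x` whose distances to `x` have ratio `2`, this
exception cannot save both, so one of them is driven away from `x`. If the orbit of `x` hits `0`,
nearby points are driven away by the repelling fixed point `0` instead.
-/

section Ultrametric

variable {E : Type*} [SeminormedAddCommGroup E] [IsUltrametricDist E] {x y : E} {r : ℝ}

theorem norm_add_le_of_norm_le_of_norm_le (hx : ‖x‖ ≤ r) (hy : ‖y‖ ≤ r) : ‖x + y‖ ≤ r :=
  (IsUltrametricDist.norm_add_le_max x y).trans (max_le hx hy)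

theorem norm_sub_le_of_norm_le_of_norm_le (hx : ‖x‖ ≤ r) (hy : ‖y‖ ≤ r) : ‖x - y‖ ≤ r := by
  rw [sub_eq_add_neg]
  exact norm_add_le_of_norm_le_of_norm_le hx (by rwa [norm_neg])

theorem norm_sub_eq_max_of_norm_ne_norm (h : ‖x‖ ≠ ‖y‖) : ‖x - y‖ = max ‖x‖ ‖y‖ := by
  rw [sub_eq_add_neg, IsUltrametricDist.norm_add_eq_max_of_norm_ne_norm (by rwa [norm_neg]),
    norm_neg]

theorem norm_add_eq_left_of_norm_lt (h : ‖y‖ < ‖x‖) : ‖x + y‖ = ‖x‖ := by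
  rw [IsUltrametricDist.norm_add_eq_max_of_norm_ne_norm h.ne', max_eq_left h.le]

theorem norm_sub_eq_left_of_norm_lt (h : ‖y‖ < ‖x‖) : ‖x - y‖ = ‖x‖ := by
  rw [norm_sub_eq_max_of_norm_ne_norm h.ne', max_eq_left h.le]

end Ultrametric

theorem exists_natCast_lt_norm_sub_le {p : ℕ} [Fact p.Prime] {x : ℚ_[p]} (hx : ‖x‖ ≤ 1) (n : ℕ) :
    ∃ r < p ^ n, ‖x - r‖ ≤ (p : ℝ) ^ (-n : ℤ) := by
  let z : ℤ_[p] := ⟨x, hx⟩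
  have hz := (PadicInt.norm_le_pow_iff_mem_span_pow _ n).2 (PadicInt.appr_spec n z)
  refine ⟨z.appr n, PadicInt.appr_lt z n, ?_⟩
  simpa only [PadicInt.norm_def, PadicInt.coe_sub, PadicInt.coe_natCast] using hz

open Polynomial in
theorem finite_preimage_iterate_eval {R : Type*} [CommRing R] [IsDomain R] {P : R[X]}
    (hP : 0 < P.natDegree) (n : ℕ) (c : R) : ((fun x => P.eval x)^[n] ⁻¹' {c}).Finite := by
  have hQ : P.comp^[n] X - C c ≠ 0 := by
    refine ne_zero_of_natDegree_gt (n := 0) ?_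
    rw [natDegree_sub_C, natDegree_iterate_comp, natDegree_X, mul_one]
    exact pow_pos hP n
  refine (finite_setOfPred_isRoot hQ).subset fun x hx => ?_
  simpa [IsRoot.def, iterate_comp_eval, sub_eq_zero] using hx

theorem norm_two_padic : ‖(2 : ℚ_[2])‖ = 1 / 2 := by
  simpa using Padic.norm_p (p := 2)

theorem norm_three_padic : ‖(3 : ℚ_[2])‖ = 1 := by
  simpa using (Padic.norm_natCast_eq_one_iff (p := 2) (n := 3)).2 (by norm_num)

theorem norm_nine_div_four_padic : ‖(9 / 4 : ℚ_[2])‖ = 4 := by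
  rw [show (9 / 4 : ℚ_[2]) = 3 ^ 2 / 2 ^ 2 by norm_num, norm_div, norm_pow, norm_pow,
    norm_three_padic, norm_two_padic]
  norm_num

section SphericalDistance

variable {x y : ℚ_[2]}

theorem rho_le_norm_sub : rho x y ≤ ‖x - y‖ :=
  div_le_self (norm_nonneg _) (one_le_mul_of_one_le_of_one_le (le_max_right _ _) (le_max_right _ _))

theorem rho_of_norm_le_one (hx : ‖x‖ ≤ 1) : rho x y = min ‖x - y‖ 1 := by
  rw [rho, max_eq_right hx, one_mul]
  rcases le_or_gt ‖y‖ 1 with hy | hy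
  · rw [max_eq_right hy, div_one, min_eq_left (norm_sub_le_of_norm_le_of_norm_le hx hy)]
  · have hxy : ‖x - y‖ = ‖y‖ := by
      rw [norm_sub_rev, norm_sub_eq_left_of_norm_lt (hx.trans_lt hy)]
    rw [hxy, max_eq_left hy.le, div_self (by positivity), min_eq_right hy.le]

theorem rho_of_one_le_norm (hx : 1 ≤ ‖x‖) (hy : 1 ≤ ‖y‖) : rho x y = ‖x - y‖ / (‖x‖ * ‖y‖) := by
  rw [rho, max_eq_left hx, max_eq_left hy]

end SphericalDistance

section Cubic

variable {x y : ℚ_[2]}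

theorem norm_f (x : ℚ_[2]) : ‖f x‖ = 4 * ‖x‖ * ‖x - 1‖ ^ 2 := by
  simp only [f, norm_mul, norm_pow, norm_nine_div_four_padic]

theorem norm_f_sub_f (x y : ℚ_[2]) :
    ‖f x - f y‖ = 4 * ‖x - y‖ * ‖x ^ 2 + x * y + y ^ 2 - 2 * (x + y) + 1‖ := by
  have h : f x - f y = 9 / 4 * (x - y) * (x ^ 2 + x * y + y ^ 2 - 2 * (x + y) + 1) := by
    simp only [f]; ring
  rw [h, norm_mul, norm_mul, norm_nine_div_four_padic]

theorem continuous_f : Continuous f := by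
  unfold f; fun_prop

theorem iterate_f_zero (n : ℕ) : f^[n] 0 = 0 :=
  iterate_fixed (by simp [f]) n

open Polynomial in
theorem finite_preimage_iterate_f (n : ℕ) (c : ℚ_[2]) : (f^[n] ⁻¹' {c}).Finite := by
  let P : ℚ_[2][X] := C (9 / 4) * X * (X - 1) ^ 2
  have hf : f = fun x => P.eval x := by ext x; simp [f, P]
  have hP : P.natDegree = 3 := by unfold P; compute_degree!
  rw [hf]
  exact finite_preimage_iterate_eval (by rw [hP]; norm_num) n c

theorem norm_eq_one_of_norm_sub_one_lt (hx : ‖x - 1‖ < 1) : ‖x‖ = 1 := by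
  have h := norm_add_eq_left_of_norm_lt (x := (1 : ℚ_[2])) (y := x - 1) (by rwa [norm_one])
  rwa [add_sub_cancel, norm_one] at h

theorem norm_sub_one_of_norm_lt_one (hx : ‖x‖ < 1) : ‖x - 1‖ = 1 := by
  rw [norm_sub_rev, norm_sub_eq_left_of_norm_lt (by rwa [norm_one]), norm_one]

end Cubic

section Fatou

variable {x y : ℚ_[2]}

theorem fatou_of_mem_isOpen {S : Set ℚ_[2]} (hS : IsOpen S) (hf : MapsTo f S S)
    (hρ : ∀ x ∈ S, ∀ y ∈ S, rho (f x) (f y) ≤ rho x y) (hx : x ∈ S) : fatou x := by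
  intro ε hε
  obtain ⟨δ, hδ, hball⟩ := Metric.isOpen_iff.1 hS x hx
  refine ⟨min δ ε, lt_min hδ hε, fun y hy n => ?_⟩
  have hyS : y ∈ S := hball (mem_ball_iff_norm.2 (hy.trans_le (min_le_left _ _)))
  have hn : rho (f^[n] x) (f^[n] y) ≤ rho x y := by
    induction n with
    | zero => exact le_rfl
    | succ n ih =>
      rw [iterate_succ_apply', iterate_succ_apply']
      exact (hρ _ (hf.iterate n hx) _ (hf.iterate n hyS)).trans ih
  calc rho (f^[n] x) (f^[n] y) ≤ ‖x - y‖ := hn.trans rho_le_norm_sub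
    _ = ‖y - x‖ := norm_sub_rev x y
    _ < ε := hy.trans_le (min_le_right _ _)

theorem fatou_of_fatou_f (h : fatou (f x)) : fatou x := by
  intro ε hε
  obtain ⟨δ, hδ, hfatou⟩ := h ε hε
  obtain ⟨η, hη, hcont⟩ := Metric.continuous_iff.1 continuous_f x δ hδ
  simp only [dist_eq_norm] at hcont
  refine ⟨min η ε, lt_min hη hε, fun y hy n => ?_⟩
  cases n with
  | zero =>
    refine rho_le_norm_sub.trans_lt ?_
    rw [iterate_zero, id, id, norm_sub_rev]
    exact hy.trans_le (min_le_right _ _)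
  | succ n => exact hfatou (f y) (hcont y (hy.trans_le (min_le_left _ _))) n

theorem fatou_of_fatou_iterate {n : ℕ} (h : fatou (f^[n] x)) : fatou x := by
  induction n with
  | zero => exact h
  | succ n ih =>
    rw [iterate_succ_apply'] at h
    exact ih (fatou_of_fatou_f h)

theorem norm_f_of_one_lt_norm (hx : 1 < ‖x‖) : ‖f x‖ = 4 * ‖x‖ ^ 3 := by
  rw [norm_f, norm_sub_eq_left_of_norm_lt (by rwa [norm_one])]
  ring

theorem one_lt_norm_f_of_one_lt_norm (hx : 1 < ‖x‖) : 1 < ‖f x‖ := by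
  rw [norm_f_of_one_lt_norm hx]
  linarith [one_lt_pow₀ hx (n := 3) (by norm_num)]

theorem norm_f_sub_f_le_of_one_lt_norm (hx : 1 < ‖x‖) (hy : 1 < ‖y‖) :
    ‖f x - f y‖ ≤ 4 * ‖x - y‖ * (‖x‖ ^ 2 * ‖y‖ ^ 2) := by
  have hx2 : 1 ≤ ‖x‖ ^ 2 := one_le_pow₀ hx.le
  have hy2 : 1 ≤ ‖y‖ ^ 2 := one_le_pow₀ hy.le
  have hxy : ‖x‖ * ‖y‖ ≤ ‖x‖ ^ 2 * ‖y‖ ^ 2 := by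
    rw [← mul_pow]
    exact le_self_pow₀ (one_le_mul_of_one_le_of_one_le hx.le hy.le) two_ne_zero
  have hsum : ‖2 * (x + y)‖ ≤ ‖x‖ * ‖y‖ := by
    have : ‖x + y‖ ≤ ‖x‖ * ‖y‖ := norm_add_le_of_norm_le_of_norm_le
      (le_mul_of_one_le_right (norm_nonneg x) hy.le) (le_mul_of_one_le_left (norm_nonneg y) hx.le)
    rw [norm_mul, norm_two_padic]
    linarith [norm_nonneg (x + y)]
  rw [norm_f_sub_f]
  gcongr
  refine norm_add_le_of_norm_le_of_norm_le (norm_sub_le_of_norm_le_of_norm_le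
    (norm_add_le_of_norm_le_of_norm_le (norm_add_le_of_norm_le_of_norm_le ?_ ?_) ?_) ?_) ?_
  · rw [norm_pow]; exact le_mul_of_one_le_right (sq_nonneg _) hy2
  · rwa [norm_mul]
  · rw [norm_pow]; exact le_mul_of_one_le_left (sq_nonneg _) hx2
  · exact hsum.trans hxy
  · rw [norm_one]; exact one_le_mul_of_one_le_of_one_le hx2 hy2

theorem rho_f_le_rho_of_one_lt_norm (hx : 1 < ‖x‖) (hy : 1 < ‖y‖) :
    rho (f x) (f y) ≤ rho x y := by
  rw [rho_of_one_le_norm (one_lt_norm_f_of_one_lt_norm hx).le (one_lt_norm_f_of_one_lt_norm hy).le,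
    rho_of_one_le_norm hx.le hy.le, norm_f_of_one_lt_norm hx, norm_f_of_one_lt_norm hy]
  calc ‖f x - f y‖ / (4 * ‖x‖ ^ 3 * (4 * ‖y‖ ^ 3))
      ≤ 4 * ‖x - y‖ * (‖x‖ ^ 2 * ‖y‖ ^ 2) / (4 * ‖x‖ ^ 3 * (4 * ‖y‖ ^ 3)) := by
        gcongr; exact norm_f_sub_f_le_of_one_lt_norm hx hy
    _ = ‖x - y‖ / (‖x‖ * ‖y‖) / 4 := by
        field_simp [(one_pos.trans hx).ne', (one_pos.trans hy).ne']
    _ ≤ ‖x - y‖ / (‖x‖ * ‖y‖) := div_le_self (by positivity) (by norm_num)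

theorem fatou_of_one_lt_norm (hx : 1 < ‖x‖) : fatou x :=
  fatou_of_mem_isOpen (S := {x | 1 < ‖x‖}) (isOpen_lt continuous_const continuous_norm)
    (fun _ => one_lt_norm_f_of_one_lt_norm) (fun _ hx _ hy => rho_f_le_rho_of_one_lt_norm hx hy) hx

theorem norm_f_sub_f_le_of_norm_sub_one_third_le (hx : ‖x - 1 / 3‖ ≤ 1 / 4)
    (hy : ‖y - 1 / 3‖ ≤ 1 / 4) : ‖f x - f y‖ ≤ ‖x - y‖ := by
  set a := x - 1 / 3
  set b := y - 1 / 3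
  have hab : x ^ 2 + x * y + y ^ 2 - 2 * (x + y) + 1 = a * (a + b - 1) + b * (b - 1) := by
    simp only [a, b]; ring
  have hb1 : ‖b - 1‖ = 1 := norm_sub_one_of_norm_lt_one (by linarith)
  have hab1 : ‖a + b - 1‖ = 1 :=
    norm_sub_one_of_norm_lt_one
      ((norm_add_le_of_norm_le_of_norm_le hx hy).trans_lt (by norm_num))
  have hfactor : ‖a * (a + b - 1) + b * (b - 1)‖ ≤ 1 / 4 :=
    norm_add_le_of_norm_le_of_norm_le (by rwa [norm_mul, hab1, mul_one])
      (by rwa [norm_mul, hb1, mul_one])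
  rw [norm_f_sub_f, hab]
  nlinarith [norm_nonneg (x - y)]

theorem norm_f_sub_one_third_le (hx : ‖x - 1 / 3‖ ≤ 1 / 4) : ‖f x - 1 / 3‖ ≤ 1 / 4 := by
  have hfix : f (1 / 3) = 1 / 3 := by norm_num [f]
  have h := norm_f_sub_f_le_of_norm_sub_one_third_le hx (y := 1 / 3) (by norm_num)
  rw [hfix] at h
  exact h.trans hx

theorem norm_le_one_of_norm_sub_one_third_le (hx : ‖x - 1 / 3‖ ≤ 1 / 4) : ‖x‖ ≤ 1 := by
  have h := norm_add_le_of_norm_le_of_norm_le (hx.trans (by norm_num))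
    (by rw [norm_div, norm_one, norm_three_padic, div_one] : ‖(1 / 3 : ℚ_[2])‖ ≤ 1)
  rwa [sub_add_cancel] at h

theorem fatou_of_norm_sub_one_third_le (hx : ‖x - 1 / 3‖ ≤ 1 / 4) : fatou x := by
  refine fatou_of_mem_isOpen (S := Metric.closedBall (1 / 3) (1 / 4))
    (IsUltrametricDist.isOpen_closedBall _ (by norm_num)) ?_ ?_ (mem_closedBall_iff_norm.2 hx)
  · intro x hx
    rw [mem_closedBall_iff_norm] at hx ⊢
    exact norm_f_sub_one_third_le hx
  · intro x hx y hy
    rw [mem_closedBall_iff_norm] at hx hy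
    rw [rho_of_norm_le_one (norm_le_one_of_norm_sub_one_third_le hx),
      rho_of_norm_le_one (norm_le_one_of_norm_sub_one_third_le (norm_f_sub_one_third_le hx))]
    exact min_le_min_right _ (norm_f_sub_f_le_of_norm_sub_one_third_le hx hy)

theorem fatou_of_norm_sub_two_le (hx : ‖x - 2‖ ≤ 1 / 4) : fatou x := by
  have hx2 : ‖x‖ = 1 / 2 := by
    have h := norm_add_eq_left_of_norm_lt (x := (2 : ℚ_[2])) (y := x - 2)
      (by rw [norm_two_padic]; linarith)
    rwa [add_sub_cancel, norm_two_padic] at h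
  refine fatou_of_fatou_f (fatou_of_one_lt_norm ?_)
  rw [norm_f, norm_sub_one_of_norm_lt_one (by rw [hx2]; norm_num), hx2]
  norm_num

theorem norm_sub_one_third_le_of_norm_sub_three_le (hx : ‖x - 3‖ ≤ 1 / 4) :
    ‖x - 1 / 3‖ ≤ 1 / 4 := by
  have h83 : ‖(8 / 3 : ℚ_[2])‖ ≤ 1 / 4 := by
    rw [show (8 / 3 : ℚ_[2]) = 2 ^ 3 / 3 by norm_num, norm_div, norm_pow, norm_three_padic,
      norm_two_padic]
    norm_num
  have h := norm_add_le_of_norm_le_of_norm_le hx h83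
  rwa [show x - 3 + 8 / 3 = x - 1 / 3 by ring] at h

theorem fatou_of_lt_norm_of_lt_norm_sub_one (h0 : 1 / 4 < ‖x‖) (h1 : 1 / 4 < ‖x - 1‖) :
    fatou x := by
  rcases lt_or_ge 1 ‖x‖ with hx | hx
  · exact fatou_of_one_lt_norm hx
  obtain ⟨r, hr, hxr⟩ := exists_natCast_lt_norm_sub_le hx 2
  rw [show ((2 : ℕ) : ℝ) ^ (-(2 : ℕ) : ℤ) = 1 / 4 by norm_num] at hxr
  interval_cases r
  · rw [Nat.cast_zero, sub_zero] at hxr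
    exact absurd hxr h0.not_ge
  · rw [Nat.cast_one] at hxr
    exact absurd hxr h1.not_ge
  · exact fatou_of_norm_sub_two_le (by exact_mod_cast hxr)
  · exact fatou_of_norm_sub_one_third_le
      (norm_sub_one_third_le_of_norm_sub_three_le (by exact_mod_cast hxr))

end Fatou

/-- The survivor set of `4ℤ₂ ∪ (1 + 4ℤ₂)`: the points whose forward orbit under `f` never leaves
these two disks. -/
def survivorSet : Set ℚ_[2] := {x | ∀ n, ‖f^[n] x‖ ≤ 1 / 4 ∨ ‖f^[n] x - 1‖ ≤ 1 / 4}

/-- `y` shadows `x` if the orbits of `x` and `y` under `f` stay at distance less than `1/8`. With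
this constant a point shadowing `x ∈ 1 + 4ℤ₂` at distance other than `‖x - 1‖ / 2` is closer to `x`
than `‖x - 1‖ / 4`, where the return map to `1 + 4ℤ₂` is expanding. -/
def Shadows (x y : ℚ_[2]) : Prop := ∀ n, ‖f^[n] x - f^[n] y‖ < 1 / 8

section Survivor

variable {x y z : ℚ_[2]}

theorem iterate_mem_survivorSet (hx : x ∈ survivorSet) (k : ℕ) : f^[k] x ∈ survivorSet := by
  intro n
  rw [← iterate_add_apply]
  exact hx (n + k)

theorem norm_le_one_of_mem_survivorSet (hx : x ∈ survivorSet) : ‖x‖ ≤ 1 := by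
  rcases hx 0 with h | h
  · exact h.trans (by norm_num)
  · exact (norm_eq_one_of_norm_sub_one_lt (h.trans_lt (by norm_num))).le

theorem Shadows.iterate (h : Shadows x y) (k : ℕ) : Shadows (f^[k] x) (f^[k] y) := by
  intro n
  rw [← iterate_add_apply, ← iterate_add_apply]
  exact h (n + k)

theorem Shadows.norm_sub_lt (h : Shadows x y) : ‖x - y‖ < 1 / 8 := h 0

theorem Shadows.norm_le (h : Shadows x y) (hx : ‖x‖ ≤ 1 / 4) : ‖y‖ ≤ 1 / 4 := by
  have hy := norm_sub_le_of_norm_le_of_norm_le hx (h.norm_sub_lt.le.trans (by norm_num))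
  rwa [sub_sub_cancel] at hy

theorem exists_forall_shadows_of_fatou (hx : x ∈ survivorSet) (h : fatou x) :
    ∃ δ > 0, ∀ y, ‖y - x‖ < δ → Shadows x y := by
  obtain ⟨δ, hδ, hfatou⟩ := h (1 / 8) (by norm_num)
  refine ⟨δ, hδ, fun y hy n => ?_⟩
  have hn := hfatou y hy n
  rw [rho_of_norm_le_one (norm_le_one_of_mem_survivorSet (iterate_mem_survivorSet hx n))] at hn
  exact (min_lt_iff.1 hn).resolve_right (by norm_num)

theorem norm_f_sub_f_of_norm_le (hx : ‖x‖ ≤ 1 / 4) (hy : ‖y‖ ≤ 1 / 4) :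
    ‖f x - f y‖ = 4 * ‖x - y‖ := by
  have hs : ‖x + y‖ ≤ 1 / 4 := norm_add_le_of_norm_le_of_norm_le hx hy
  have hs2 : ‖x + y - 2‖ ≤ 1 :=
    norm_sub_le_of_norm_le_of_norm_le (hs.trans (by norm_num)) (by rw [norm_two_padic]; norm_num)
  have hsmall : ‖(x + y) * (x + y - 2) - x * y‖ ≤ 1 / 4 := by
    apply norm_sub_le_of_norm_le_of_norm_le <;> rw [norm_mul]
    · exact (mul_le_of_le_one_right (norm_nonneg _) hs2).trans hs
    · exact (mul_le_of_le_one_right (norm_nonneg _) (hy.trans (by norm_num))).trans hx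
  have hfactor : x ^ 2 + x * y + y ^ 2 - 2 * (x + y) + 1 =
      1 + ((x + y) * (x + y - 2) - x * y) := by ring
  rw [norm_f_sub_f, hfactor, norm_add_eq_left_of_norm_lt, norm_one, mul_one]
  rw [norm_one]
  exact hsmall.trans_lt (by norm_num)

theorem norm_iterate_f_sub_iterate_f_of_norm_le {k : ℕ} (hx : ∀ j < k, ‖f^[j] x‖ ≤ 1 / 4)
    (hy : ∀ j < k, ‖f^[j] y‖ ≤ 1 / 4) : ‖f^[k] x - f^[k] y‖ = 4 ^ k * ‖x - y‖ := by
  induction k with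
  | zero => simp
  | succ k ih =>
    rw [iterate_succ_apply', iterate_succ_apply',
      norm_f_sub_f_of_norm_le (hx k k.lt_succ_self) (hy k k.lt_succ_self),
      ih (fun j hj => hx j (hj.trans k.lt_succ_self)) fun j hj => hy j (hj.trans k.lt_succ_self)]
    ring

theorem norm_iterate_f_of_norm_le {k : ℕ} (hx : ∀ j < k, ‖f^[j] x‖ ≤ 1 / 4) :
    ‖f^[k] x‖ = 4 ^ k * ‖x‖ := by
  have h := norm_iterate_f_sub_iterate_f_of_norm_le hx (y := 0)
    fun j _ => by rw [iterate_f_zero, norm_zero]; norm_num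
  rwa [iterate_f_zero, sub_zero, sub_zero] at h

theorem exists_lt_norm_iterate_f (hx : x ≠ 0) : ∃ k, 1 / 4 < ‖f^[k] x‖ := by
  by_contra! h
  obtain ⟨k, hk⟩ := pow_unbounded_of_one_lt ‖x‖⁻¹ (by norm_num : (1 : ℝ) < 4)
  have hk1 : 1 < 4 ^ k * ‖x‖ := (inv_lt_iff_one_lt_mul₀ (norm_pos_iff.2 hx)).1 hk
  linarith [norm_iterate_f_of_norm_le (k := k) fun j _ => h j, h k]

theorem Shadows.eq_zero (h : Shadows 0 y) : y = 0 := by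
  by_contra hy
  obtain ⟨k, hk⟩ := exists_lt_norm_iterate_f hy
  have := (h.iterate k).norm_le (by rw [iterate_f_zero, norm_zero]; norm_num)
  linarith

theorem exists_iterate_f_near_one (hK : x ∈ survivorSet) (hx : x ≠ 0) :
    ∃ k, ‖f^[k] x - 1‖ ≤ 1 / 4 ∧
      ∀ y, Shadows x y → ‖f^[k] x - f^[k] y‖ = ‖x - y‖ / ‖x‖ := by
  classical
  have hexit := exists_lt_norm_iterate_f hx
  set k := Nat.find hexit
  have hbefore : ∀ j < k, ‖f^[j] x‖ ≤ 1 / 4 := fun j hj => not_lt.1 (Nat.find_min hexit hj)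
  have hone : ‖f^[k] x - 1‖ ≤ 1 / 4 := (hK k).resolve_left (Nat.find_spec hexit).not_ge
  have hnorm : 4 ^ k * ‖x‖ = 1 := by
    rw [← norm_iterate_f_of_norm_le hbefore]
    exact norm_eq_one_of_norm_sub_one_lt (hone.trans_lt (by norm_num))
  refine ⟨k, hone, fun y hxy => ?_⟩
  rw [norm_iterate_f_sub_iterate_f_of_norm_le hbefore
      fun j hj => (hxy.iterate j).norm_le (hbefore j hj),
    eq_div_iff (norm_ne_zero_iff.2 hx), mul_right_comm, hnorm, one_mul]

theorem norm_sub_one_add_sub_one (hne : ‖x - y‖ ≠ ‖x - 1‖ / 2) :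
    ‖(x - 1) + (y - 1)‖ = max (‖x - 1‖ / 2) ‖x - y‖ := by
  have h2 : ‖2 * (x - 1)‖ = ‖x - 1‖ / 2 := by rw [norm_mul, norm_two_padic]; ring
  rw [show (x - 1) + (y - 1) = 2 * (x - 1) - (x - y) by ring,
    norm_sub_eq_max_of_norm_ne_norm (by rw [h2]; exact hne.symm), h2]

theorem norm_f_sub_f_of_norm_sub_one_le (hx : ‖x - 1‖ ≤ 1 / 4) (hxy : ‖x - y‖ ≤ 1 / 4)
    (hne : ‖x - y‖ ≠ ‖x - 1‖ / 2) :
    ‖f x - f y‖ = 4 * ‖x - y‖ * max (‖x - 1‖ / 2) ‖x - y‖ := by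
  have hsum := norm_sub_one_add_sub_one hne
  set u := x - 1
  set v := y - 1
  set m := max (‖u‖ / 2) ‖x - y‖
  have hum : ‖u‖ / 2 ≤ m := le_max_left _ _
  have hdm : ‖x - y‖ ≤ m := le_max_right _ _
  have hm : 0 < m := by
    by_contra! h
    exact hne (by linarith [norm_nonneg u, norm_nonneg (x - y)])
  have hv : ‖v‖ ≤ 2 * m := by
    rw [show v = u - (x - y) by simp only [u, v]; ring]
    exact norm_sub_le_of_norm_le_of_norm_le (by linarith) (by linarith)
  have huv : ‖u * v‖ < m := by
    calc ‖u * v‖ ≤ 1 / 4 * (2 * m) := by rw [norm_mul]; gcongr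
      _ < m := by linarith
  have hunit : ‖1 + (u + v)‖ = 1 := by
    have hm1 : m < 1 := max_lt (by linarith) (by linarith)
    rw [norm_add_eq_left_of_norm_lt (by rwa [hsum, norm_one]), norm_one]
  have hlead : ‖(u + v) * (1 + (u + v))‖ = m := by rw [norm_mul, hunit, hsum, mul_one]
  have hfactor : x ^ 2 + x * y + y ^ 2 - 2 * (x + y) + 1 = (u + v) * (1 + (u + v)) - u * v := by
    simp only [u, v]; ring
  rw [norm_f_sub_f, hfactor, norm_sub_eq_left_of_norm_lt (huv.trans_eq hlead.symm), hlead]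

theorem norm_sub_one_pos_of_f_ne_zero (h : f x ≠ 0) : 0 < ‖x - 1‖ := by
  refine norm_pos_iff.2 fun hx => h ?_
  rw [f, hx]; ring

theorem norm_f_of_norm_sub_one_le (hx : ‖x - 1‖ ≤ 1 / 4) : ‖f x‖ = 4 * ‖x - 1‖ ^ 2 := by
  rw [norm_f, norm_eq_one_of_norm_sub_one_lt (hx.trans_lt (by norm_num)), mul_one]

theorem exists_return_near_one (hK : x ∈ survivorSet) (hx : ‖x - 1‖ ≤ 1 / 4) (hfx : f x ≠ 0) :
    ∃ k, ‖f^[k] x - 1‖ ≤ 1 / 4 ∧ ∀ y, Shadows x y → ‖x - y‖ ≠ ‖x - 1‖ / 2 →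
      ‖x - y‖ < ‖x - 1‖ / 4 ∧ ‖f^[k] x - f^[k] y‖ = ‖x - y‖ / (2 * ‖x - 1‖) := by
  have hu := norm_sub_one_pos_of_f_ne_zero hfx
  obtain ⟨k, hk, hdist⟩ := exists_iterate_f_near_one (iterate_mem_survivorSet hK 1) hfx
  refine ⟨k + 1, hk, fun y hxy hne => ?_⟩
  have hreturn : ‖f^[k + 1] x - f^[k + 1] y‖ =
      ‖x - y‖ * max (‖x - 1‖ / 2) ‖x - y‖ / ‖x - 1‖ ^ 2 := by
    have hd := hdist (f y) (hxy.iterate 1)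
    rw [iterate_one] at hd
    rw [iterate_succ_apply, iterate_succ_apply, hd, norm_f_of_norm_sub_one_le hx,
      norm_f_sub_f_of_norm_sub_one_le hx (hxy.norm_sub_lt.le.trans (by norm_num)) hne,
      mul_assoc, mul_div_mul_left _ _ four_ne_zero]
  have hclose : ‖x - y‖ < ‖x - 1‖ / 4 := by
    by_contra! hfar
    have hlt := (hxy.iterate (k + 1)).norm_sub_lt
    rw [hreturn, div_lt_iff₀ (by positivity)] at hlt
    have hmul : ‖x - 1‖ / 4 * (‖x - 1‖ / 2) ≤ ‖x - y‖ * max (‖x - 1‖ / 2) ‖x - y‖ := by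
      gcongr; exact le_max_left _ _
    linarith
  refine ⟨hclose, ?_⟩
  rw [hreturn, max_eq_left (by linarith)]
  field_simp

theorem norm_sub_lt_half_pow_of_shadows_pair (N : ℕ) (hK : x ∈ survivorSet) (h0 : ∀ n, f^[n] x ≠ 0)
    (hx : ‖x - 1‖ ≤ 1 / 4) (hy : Shadows x y) (hz : Shadows x z)
    (hyz : ‖x - z‖ = ‖x - y‖ / 2) : ‖x - y‖ < (1 / 2) ^ N := by
  induction N generalizing x y z with
  | zero => exact hy.norm_sub_lt.trans (by norm_num)
  | succ N ih =>
    obtain ⟨k, hk, hreturn⟩ := exists_return_near_one hK hx (h0 1)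
    have hu := norm_sub_one_pos_of_f_ne_zero (h0 1)
    have hy2 : ‖x - y‖ ≠ ‖x - 1‖ / 2 := by
      intro h
      have hlt := (hreturn z hz (by rw [hyz, h]; linarith)).1
      linarith
    obtain ⟨hlt, hyk⟩ := hreturn y hy hy2
    obtain ⟨-, hzk⟩ := hreturn z hz (by rw [hyz]; linarith)
    have hN := ih (iterate_mem_survivorSet hK k)
      (fun n => by rw [← iterate_add_apply]; exact h0 _) hk (hy.iterate k) (hz.iterate k)
      (by rw [hyk, hzk, hyz]; ring)
    rw [hyk, div_lt_iff₀ (by positivity)] at hN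
    calc ‖x - y‖ < (1 / 2) ^ N * (2 * ‖x - 1‖) := hN
      _ ≤ (1 / 2) ^ N * (1 / 2) := by gcongr; linarith
      _ = (1 / 2) ^ (N + 1) := (pow_succ _ _).symm

theorem eq_of_shadows_pair (hK : x ∈ survivorSet) (h0 : ∀ n, f^[n] x ≠ 0) (hy : Shadows x y)
    (hz : Shadows x z) (hyz : ‖x - z‖ = ‖x - y‖ / 2) : x = y := by
  obtain ⟨k, hk, hdist⟩ := exists_iterate_f_near_one hK (h0 0)
  have hsmall : ∀ N : ℕ, ‖x - y‖ / ‖x‖ < (1 / 2) ^ N := fun N => by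
    rw [← hdist y hy]
    exact norm_sub_lt_half_pow_of_shadows_pair N (iterate_mem_survivorSet hK k)
      (fun n => by rw [← iterate_add_apply]; exact h0 _) hk (hy.iterate k) (hz.iterate k)
      (by rw [hdist y hy, hdist z hz, hyz]; ring)
  by_contra hne
  have hpos : 0 < ‖x - y‖ / ‖x‖ :=
    div_pos (norm_pos_iff.2 (sub_ne_zero.2 hne)) (norm_pos_iff.2 (h0 0))
  obtain ⟨N, hN⟩ := exists_pow_lt_of_lt_one hpos (by norm_num : (1 / 2 : ℝ) < 1)
  exact (hN.trans (hsmall N)).false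

theorem exists_not_shadows_of_iterate_f_eq_zero {m : ℕ} (hm : f^[m] x = 0) {δ : ℝ} (hδ : 0 < δ) :
    ∃ y, ‖y - x‖ < δ ∧ ¬ Shadows x y := by
  obtain ⟨y, hy, hym⟩ := (infinite_of_mem_nhds x (Metric.ball_mem_nhds x hδ)).exists_notMem_finite
    (finite_preimage_iterate_f m 0)
  refine ⟨y, mem_ball_iff_norm.1 hy, fun h => hym ?_⟩
  have h0 := h.iterate m
  rw [hm] at h0
  exact h0.eq_zero

theorem exists_not_shadows_of_iterate_f_ne_zero (hK : x ∈ survivorSet) (h0 : ∀ n, f^[n] x ≠ 0)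
    {δ : ℝ} (hδ : 0 < δ) : ∃ y, ‖y - x‖ < δ ∧ ¬ Shadows x y := by
  obtain ⟨c, hc0, hcδ⟩ := NormedField.exists_norm_lt ℚ_[2] hδ
  have h2c : ‖2 * c‖ = ‖c‖ / 2 := by rw [norm_mul, norm_two_padic]; ring
  by_contra! h
  have hy : Shadows x (x + c) := h _ (by rwa [add_sub_cancel_left])
  have hz : Shadows x (x + 2 * c) := h _ (by rw [add_sub_cancel_left, h2c]; linarith)
  have heq := eq_of_shadows_pair hK h0 hy hz
    (by rw [sub_add_cancel_left, sub_add_cancel_left, norm_neg, norm_neg, h2c])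
  exact norm_pos_iff.1 hc0 (by simpa using heq)

theorem not_fatou_of_mem_survivorSet (hK : x ∈ survivorSet) : ¬ fatou x := by
  intro h
  obtain ⟨δ, hδ, hshadow⟩ := exists_forall_shadows_of_fatou hK h
  obtain ⟨y, hy, hxy⟩ : ∃ y, ‖y - x‖ < δ ∧ ¬ Shadows x y := by
    by_cases h0 : ∀ n, f^[n] x ≠ 0
    · exact exists_not_shadows_of_iterate_f_ne_zero hK h0 hδ
    · obtain ⟨m, hm⟩ := not_forall_not.1 h0
      exact exists_not_shadows_of_iterate_f_eq_zero hm hδ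
  exact hxy (hshadow y hy)

theorem mem_survivorSet_of_not_fatou (h : ¬ fatou x) : x ∈ survivorSet := by
  intro n
  by_contra! hn
  exact h (fatou_of_fatou_iterate (fatou_of_lt_norm_of_lt_norm_sub_one hn.1 hn.2))

theorem not_fatou_iff_mem_survivorSet : ¬ fatou x ↔ x ∈ survivorSet :=
  ⟨mem_survivorSet_of_not_fatou, not_fatou_of_mem_survivorSet⟩

end Survivor

/-- The Julia set of `f` in `ℚ₂` equals the set of points whose entire forward orbit
stays in `4ℤ₂ ∪ (1 + 4ℤ₂)`. -/
theorem stmt14 :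
    ({x : ℚ_[2] | ¬ fatou x} =
      {x : ℚ_[2] | ∀ n : ℕ,
        f^[n] x ∈ {y : ℚ_[2] | ‖y‖ ≤ (1 / 2 : ℝ) ^ 2} ∪
          {y : ℚ_[2] | ‖y - 1‖ ≤ (1 / 2 : ℝ) ^ 2}}) ∧
    ({x : ℚ_[2] | ¬ fatou x} =
      ⋂ n : ℕ, f^[n] ⁻¹'
        ({y : ℚ_[2] | ‖y‖ ≤ (1 / 2 : ℝ) ^ 2} ∪
          {y : ℚ_[2] | ‖y - 1‖ ≤ (1 / 2 : ℝ) ^ 2})) := by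
  have hdisks : ∀ x : ℚ_[2], ¬ fatou x ↔
      ∀ n : ℕ, ‖f^[n] x‖ ≤ (1 / 2 : ℝ) ^ 2 ∨ ‖f^[n] x - 1‖ ≤ (1 / 2 : ℝ) ^ 2 := fun x => by
    rw [not_fatou_iff_mem_survivorSet, show (1 / 2 : ℝ) ^ 2 = 1 / 4 by norm_num]
    rfl
  refine ⟨ext hdisks, ext fun x => ?_⟩
  rw [mem_iInter]
  exact hdisks x
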